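/- Let k be a field, C a small category, and M : C → Vec_k a pointwise finite-dimensional indecomposable persistence module. Then the endomorphism ring End(M) is local: for every endomorphism θ of M, either θ is an isomorphism or 1 − θ is an isomorphism. -/

import Mathlib

namespace PModCat

open CategoryTheory

variable (k : Type) [Field k]

/-- A persistence module over a small category `C`: a functor from `C` to
`k`-vector spaces, given explicitly. -/
structure PersistenceModule (C : Type) [Category C] where
  V : C → Type
  [addCommGroup : ∀ x, AddCommGroup (V x)]
  [module : ∀ x, Module k (V x)]
  map : ∀ {x y : C}, (x ⟶ y) → (V x →ₗ[k] V y)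
  map_id : ∀ x : C, map (𝟙 x) = LinearMap.id
  map_comp : ∀ {x y z : C} (f : x ⟶ y) (g : y ⟶ z),
      map (f ≫ g) = (map g).comp (map f)

attribute [instance] PersistenceModule.addCommGroup PersistenceModule.module

variable {k}

/-- A morphism of persistence modules (a natural transformation). -/
structure Hom {C : Type} [Category C] (M N : PersistenceModule k C) where
  app : ∀ x, M.V x →ₗ[k] N.V x
  natural : ∀ {x y : C} (f : x ⟶ y), (N.map f).comp (app x) = (app y).comp (M.map f)

/-- A morphism of persistence modules is an isomorphism iff it is pointwise bijective. -/
def IsIsoHom {C : Type} [Category C] {M N : PersistenceModule k C} (f : Hom M N) : Prop :=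
  ∀ x, Function.Bijective (f.app x)

/-- Two persistence modules are isomorphic if there is a pointwise bijective
morphism between them. -/
def Isomorphic {C : Type} [Category C] (M N : PersistenceModule k C) : Prop :=
  ∃ f : Hom M N, IsIsoHom f

/-- The endomorphism `1 - θ` of `M`, for an endomorphism `θ` of `M`. -/
def oneSub {C : Type} [Category C] {M : PersistenceModule k C} (θ : Hom M M) : Hom M M where
  app x := LinearMap.id - θ.app x
  natural {x y} f := by
    rw [LinearMap.comp_sub, LinearMap.sub_comp, θ.natural f, LinearMap.comp_id,
      LinearMap.id_comp]

/-- The direct sum of a family of persistence modules, taken pointwise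
(`Π₀` is the finitely supported product, i.e. the direct sum). -/
noncomputable def directSum {C : Type} [Category C] {ι : Type}
    (N : ι → PersistenceModule k C) : PersistenceModule k C where
  V x := Π₀ i, (N i).V x
  map {x y} f := DFinsupp.mapRange.linearMap (fun i => (N i).map f)
  map_id x := by
    have h : (fun i => (N i).map (𝟙 x)) =
        fun i => (LinearMap.id : (N i).V x →ₗ[k] (N i).V x) :=
      funext fun i => (N i).map_id x
    rw [h]
    exact DFinsupp.mapRange.linearMap_id
  map_comp {x y z} f g := by
    have h : (fun i => (N i).map (f ≫ g)) =
        fun i => ((N i).map g).comp ((N i).map f) :=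
      funext fun i => (N i).map_comp f g
    rw [h]
    exact DFinsupp.mapRange.linearMap_comp _ _

/-- The binary direct sum of two persistence modules, taken pointwise. -/
def sum2 {C : Type} [Category C] (M N : PersistenceModule k C) : PersistenceModule k C where
  V x := M.V x × N.V x
  map f := (M.map f).prodMap (N.map f)
  map_id x := by
    rw [M.map_id, N.map_id]
    exact LinearMap.prodMap_id
  map_comp f g := by
    rw [M.map_comp f g, N.map_comp f g]
    exact (LinearMap.prodMap_comp _ _ _ _).symm

/-- The zero persistence module predicate. -/
def IsZero {C : Type} [Category C] (M : PersistenceModule k C) : Prop :=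
  ∀ x, ∀ v : M.V x, v = 0

/-- A persistence module is indecomposable if it is nonzero and whenever it is
isomorphic to a direct sum of two modules, one of the summands is zero. -/
def Indecomposable {C : Type} [Category C] (M : PersistenceModule k C) : Prop :=
  ¬ IsZero M ∧ ∀ M' M'' : PersistenceModule k C,
    Isomorphic M (sum2 M' M'') → IsZero M' ∨ IsZero M''

end PModCat

/- Fitting's lemma, applied pointwise: the spaces `⋃ₙ ker θₓⁿ` and `⋂ₙ im θₓⁿ` are complementary
at every `x`, and as `x` varies they form submodules of `M`, because `θ` commutes with the structure
maps. The exponent at which they stabilise may depend on `x`, so one takes unions and intersections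
over all `n`, not the kernel and image of one power. Indecomposability kills one of the two
submodules: `θ` is then either pointwise bijective or pointwise nilpotent, and in the latter case
`1 - θ` is invertible. -/

namespace PModCat

open CategoryTheory

section FittingComponents

variable {R V W : Type*} [Ring R] [AddCommGroup V] [Module R V] [AddCommGroup W] [Module R W]

theorem iSup_ker_pow_le_comap {S : Module.End R V} {T : Module.End R W} {g : V →ₗ[R] W}
    (h : T ∘ₗ g = g ∘ₗ S) :
    ⨆ n : ℕ, LinearMap.ker (S ^ n) ≤ (⨆ n : ℕ, LinearMap.ker (T ^ n)).comap g := by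
  refine iSup_le fun n v hv => Submodule.mem_iSup_of_mem n ?_
  have hpow := LinearMap.congr_fun (Module.End.commute_pow_left_of_commute h n) v
  simpa [LinearMap.mem_ker.1 hv] using hpow

theorem iInf_range_pow_le_comap {S : Module.End R V} {T : Module.End R W} {g : V →ₗ[R] W}
    (h : T ∘ₗ g = g ∘ₗ S) :
    ⨅ n : ℕ, LinearMap.range (S ^ n) ≤ (⨅ n : ℕ, LinearMap.range (T ^ n)).comap g := by
  intro v hv
  refine (Submodule.mem_iInf _).2 fun n => ?_
  obtain ⟨w, rfl⟩ := (Submodule.mem_iInf _).1 hv n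
  exact ⟨g w, LinearMap.congr_fun (Module.End.commute_pow_left_of_commute h n) w⟩

theorem bijective_of_iSup_ker_pow_eq_bot [IsArtinian R V] {T : Module.End R V}
    (h : ⨆ n : ℕ, LinearMap.ker (T ^ n) = ⊥) : Function.Bijective T := by
  have hker : LinearMap.ker (T ^ 1) = ⊥ := iSup_eq_bot.1 h 1
  rw [pow_one] at hker
  exact IsArtinian.bijective_of_injective_endomorphism T (LinearMap.ker_eq_bot.1 hker)

theorem isNilpotent_of_iInf_range_pow_eq_bot [IsArtinian R V] {T : Module.End R V}
    (h : ⨅ n : ℕ, LinearMap.range (T ^ n) = ⊥) : IsNilpotent T := by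
  obtain ⟨n, hn⟩ := T.eventually_iInf_range_pow_eq.exists
  exact ⟨n, LinearMap.range_eq_bot.1 (hn.symm.trans h)⟩

end FittingComponents

variable {k : Type} [Field k] {C : Type} [Category C] {M N : PersistenceModule k C}

theorem Isomorphic.symm (h : Isomorphic M N) : Isomorphic N M := by
  obtain ⟨f, hf⟩ := h
  let e (x : C) : M.V x ≃ₗ[k] N.V x := LinearEquiv.ofBijective (f.app x) (hf x)
  refine ⟨⟨fun x => (e x).symm, fun {x y} φ => ?_⟩, fun x => (e x).symm.bijective⟩
  rw [LinearEquiv.eq_toLinearMap_symm_comp, ← LinearMap.comp_assoc,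
    LinearEquiv.comp_toLinearMap_symm_eq]
  exact (f.natural φ).symm

/-- A submodule of a persistence module: a family of subspaces preserved by the structure maps.
These are the candidate summands in a decomposition of `M`. -/
structure PersistenceSubmodule (M : PersistenceModule k C) where
  space : ∀ x, Submodule k (M.V x)
  le_comap : ∀ {x y : C} (f : x ⟶ y), space x ≤ (space y).comap (M.map f)

namespace PersistenceSubmodule

/-- A submodule of `M` regarded as a persistence module in its own right, with the restricted
structure maps; this is what allows it to occur as a summand in `sum2`. -/
def toPersistenceModule (K : PersistenceSubmodule M) : PersistenceModule k C where
  V x := K.space x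
  map f := (M.map f).restrict (K.le_comap f)
  map_id x := by
    ext v
    simp [M.map_id]
  map_comp f g := by
    ext v
    simp [M.map_comp]

theorem isZero_toPersistenceModule_iff (K : PersistenceSubmodule M) :
    IsZero K.toPersistenceModule ↔ ∀ x, K.space x = ⊥ :=
  forall_congr' fun x =>
    (subsingleton_iff_forall_eq (0 : K.space x)).symm.trans Submodule.subsingleton_iff_eq_bot

theorem isomorphic_sum2_of_isCompl {K L : PersistenceSubmodule M}
    (h : ∀ x, IsCompl (K.space x) (L.space x)) :
    Isomorphic M (sum2 K.toPersistenceModule L.toPersistenceModule) := by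
  let e (x : C) := Submodule.prodEquivOfIsCompl (K.space x) (L.space x) (h x)
  refine Isomorphic.symm ⟨⟨fun x => (e x).toLinearMap, fun f => ?_⟩, fun x => (e x).bijective⟩
  exact LinearMap.ext fun v => map_add (M.map f) v.1.1 v.2.1

end PersistenceSubmodule

theorem Indecomposable.eq_bot_or_eq_bot_of_isCompl (hM : Indecomposable M)
    {K L : PersistenceSubmodule M} (h : ∀ x, IsCompl (K.space x) (L.space x)) :
    (∀ x, K.space x = ⊥) ∨ ∀ x, L.space x = ⊥ :=
  (hM.2 _ _ (PersistenceSubmodule.isomorphic_sum2_of_isCompl h)).imp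
    K.isZero_toPersistenceModule_iff.1 L.isZero_toPersistenceModule_iff.1

namespace Hom

/-- The Fitting null component of an endomorphism `θ`: the submodule of vectors killed by some
power of `θ`. -/
def fittingNull (θ : Hom M M) : PersistenceSubmodule M where
  space x := ⨆ n : ℕ, LinearMap.ker (θ.app x ^ n)
  le_comap f := iSup_ker_pow_le_comap (θ.natural f).symm

/-- The Fitting one component of an endomorphism `θ`: the submodule of vectors lying in the image
of every power of `θ`. -/
def fittingOne (θ : Hom M M) : PersistenceSubmodule M where
  space x := ⨅ n : ℕ, LinearMap.range (θ.app x ^ n)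
  le_comap f := iInf_range_pow_le_comap (θ.natural f).symm

theorem isCompl_fittingNull_fittingOne [∀ x, FiniteDimensional k (M.V x)] (θ : Hom M M) (x : C) :
    IsCompl (θ.fittingNull.space x) (θ.fittingOne.space x) :=
  (θ.app x).isCompl_iSup_ker_pow_iInf_range_pow

end Hom

theorem Indecomposable.isIsoHom_or_isNilpotent_app [∀ x, FiniteDimensional k (M.V x)]
    (hM : Indecomposable M) (θ : Hom M M) : IsIsoHom θ ∨ ∀ x, IsNilpotent (θ.app x) :=
  (hM.eq_bot_or_eq_bot_of_isCompl θ.isCompl_fittingNull_fittingOne).imp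
    (fun hNull x => bijective_of_iSup_ker_pow_eq_bot (hNull x))
    (fun hOne x => isNilpotent_of_iInf_range_pow_eq_bot (hOne x))

theorem isIsoHom_oneSub_of_isNilpotent_app {θ : Hom M M} (h : ∀ x, IsNilpotent (θ.app x)) :
    IsIsoHom (oneSub θ) :=
  fun x => (Module.End.isUnit_iff _).1 (h x).isUnit_one_sub

end PModCat

theorem stmt8 {k : Type} [Field k] {C : Type} [CategoryTheory.SmallCategory C]
    (M : PModCat.PersistenceModule k C)
    (hfd : ∀ x, FiniteDimensional k (M.V x))
    (hind : PModCat.Indecomposable M) :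
    ∀ θ : PModCat.Hom M M, PModCat.IsIsoHom θ ∨ PModCat.IsIsoHom (PModCat.oneSub θ) := by
  intro θ
  exact (hind.isIsoHom_or_isNilpotent_app θ).imp_right PModCat.isIsoHom_oneSub_of_isNilpotent_app
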